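/- Let u ∈ ℤ_p be such that there are infinitely many indices i with p ∤ u_i. The formal power series S_u(T) = Σ_{n=0}^∞ p^{ψ(n+1)}·u_{ψ(n+1)}·T^n ∈ ℚ_p[[T]] is rational (i.e. there exist polynomials P, Q ∈ ℚ_p[T] with Q ≠ 0 and Q·S_u = P) if and only if φ_{p,q}(u) is rational. -/

import Mathlib

open scoped Classical

/-- `ε₀(u)`: the unique integer in `{0, …, p−1}` congruent to `u` modulo `p`. -/
noncomputable def eps0 {p : ℕ} [Fact p.Prime] (u : ℤ_[p]) : ℕ := (PadicInt.toZMod u).val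

/-- `φ_{p,q}(u) = Σ ε₀(-q·g^n(u)) p^n`, for a given iteration map `g`. -/
noncomputable def phi (p q : ℕ) [Fact p.Prime] (g : ℤ_[p] → ℤ_[p]) (u : ℤ_[p]) : ℤ_[p] :=
  ∑' n : ℕ, (eps0 (-((q : ℤ_[p]) * g^[n] u)) : ℤ_[p]) * (p : ℤ_[p]) ^ n


namespace Stmt8Aux

section PS
variable {p : ℕ} [Fact p.Prime]

theorem hasSum_poly_mul (Q : Polynomial ℚ_[p]) : ∀ (F : PowerSeries ℚ_[p]) (s : ℚ_[p]),
    HasSum (fun n => PowerSeries.coeff n F) s →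
    HasSum (fun n => PowerSeries.coeff n ((Q : PowerSeries ℚ_[p]) * F)) (Q.eval 1 * s) := by
  have hX : ∀ (F : PowerSeries ℚ_[p]) (s : ℚ_[p]),
      HasSum (fun n => PowerSeries.coeff n F) s →
      HasSum (fun n => PowerSeries.coeff n (PowerSeries.X * F)) s := by
    intro F s h
    rw [← hasSum_nat_add_iff' 1]
    simpa [PowerSeries.coeff_succ_X_mul] using h
  induction Q using Polynomial.induction_on with
  | C a => intro F s h; simpa using h.mul_left a
  | add P Q hP hQ =>
    intro F s h
    simpa [add_mul] using (hP F s h).add (hQ F s h)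
  | monomial n a ih =>
    intro F s h
    have := ih _ _ (hX F s h)
    simp only [Polynomial.coe_mul, Polynomial.coe_pow, Polynomial.coe_X, Polynomial.coe_C,
      Polynomial.eval_mul, Polynomial.eval_C, Polynomial.eval_pow, Polynomial.eval_X, one_pow,
      pow_succ] at this ⊢
    simpa [mul_assoc] using this

theorem hasSum_poly (Q : Polynomial ℚ_[p]) :
    HasSum (fun n => PowerSeries.coeff n (Q : PowerSeries ℚ_[p])) (Q.eval 1) := by
  have h1 : HasSum (fun n => PowerSeries.coeff n (1 : PowerSeries ℚ_[p])) 1 := by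
    have := hasSum_ite_eq (L := SummationFilter.unconditional ℕ) (0:ℕ) (1:ℚ_[p])
    simpa [PowerSeries.coeff_one] using this
  simpa using hasSum_poly_mul Q 1 1 h1

theorem reduce (F : PowerSeries ℚ_[p]) (s : ℚ_[p])
    (h : HasSum (fun n => PowerSeries.coeff n F) s) (Q : Polynomial ℚ_[p]) (k : ℕ) :
    ∀ P : Polynomial ℚ_[p],
    (((Polynomial.X - Polynomial.C 1) ^ k * Q : Polynomial ℚ_[p]) : PowerSeries ℚ_[p]) * F = P →
    ∃ P' : Polynomial ℚ_[p], (Q : PowerSeries ℚ_[p]) * F = P' := by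
  induction k with
  | zero => intro P hP; exact ⟨P, by simpa using hP⟩
  | succ k ih =>
    intro P hP
    have h1 := hasSum_poly_mul ((Polynomial.X - Polynomial.C 1) ^ (k+1) * Q) F s h
    rw [hP] at h1
    have h2 := h1.unique (hasSum_poly P)
    have h3 : P.IsRoot 1 := by
      rw [Polynomial.IsRoot, ← h2]; simp
    obtain ⟨P', rfl⟩ := Polynomial.dvd_iff_isRoot.2 h3
    apply ih P'
    have hne : ((Polynomial.X - Polynomial.C 1 : Polynomial ℚ_[p]) : PowerSeries ℚ_[p]) ≠ 0 := by
      rw [Ne, Polynomial.coe_eq_zero_iff]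
      exact Polynomial.X_sub_C_ne_zero 1
    apply mul_left_cancel₀ hne
    rw [← mul_assoc, ← Polynomial.coe_mul, ← Polynomial.coe_mul, ← hP, ← mul_assoc, ← pow_succ']

theorem exists_map (f : ℚ_[p] →ₗ[ℚ] ℚ) (Q : Polynomial ℚ_[p]) :
    ∃ R : Polynomial ℚ_[p], (∀ i, R.coeff i = ((f (Q.coeff i) : ℚ) : ℚ_[p])) ∧
      R.eval 1 = ((f (Q.eval 1) : ℚ) : ℚ_[p]) := by
  refine ⟨∑ i ∈ Finset.range (Q.natDegree + 1),
    Polynomial.monomial i ((f (Q.coeff i) : ℚ) : ℚ_[p]), ?_, ?_⟩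
  · intro i
    simp only [Polynomial.finsetSum_coeff, Polynomial.coeff_monomial, Finset.sum_ite_eq',
      Finset.mem_range]
    split_ifs with h
    · rfl
    · rw [Polynomial.coeff_eq_zero_of_natDegree_lt (by omega)]; simp
  · rw [Polynomial.eval_eq_sum_range (p := Q)]
    simp [Polynomial.eval_finsetSum]

theorem rational_of (b : ℕ → ℕ) (s : ℚ_[p]) (h : HasSum (fun n => (b n : ℚ_[p])) s)
    (P Q : Polynomial ℚ_[p]) (hQ : Q ≠ 0)
    (hPQ : (Q : PowerSeries ℚ_[p]) * PowerSeries.mk (fun n => (b n : ℚ_[p])) = P) :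
    s ∈ Set.range ((↑) : ℚ → ℚ_[p]) := by
  have hF : HasSum (fun n => PowerSeries.coeff n (PowerSeries.mk (fun n => (b n : ℚ_[p])))) s := by
    simpa using h
  obtain ⟨Q1, hQ1, hnd⟩ := Polynomial.exists_eq_pow_rootMultiplicity_mul_and_not_dvd Q hQ 1
  rw [hQ1] at hPQ
  obtain ⟨P1, hP1⟩ := reduce _ s hF Q1 _ P hPQ
  rw [Polynomial.dvd_iff_isRoot, Polynomial.IsRoot] at hnd
  obtain ⟨f, hf⟩ : ∃ f : ℚ_[p] →ₗ[ℚ] ℚ, f (Q1.eval 1) ≠ 0 := by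
    by_contra! hcon
    exact hnd ((Module.forall_dual_apply_eq_zero_iff ℚ _).1 hcon)
  obtain ⟨Q2, hQ2, hQ2e⟩ := exists_map f Q1
  obtain ⟨P2, hP2, hP2e⟩ := exists_map f P1
  have key : (Q2 : PowerSeries ℚ_[p]) * PowerSeries.mk (fun n => (b n : ℚ_[p])) = P2 := by
    ext n
    have := congrArg (PowerSeries.coeff n) hP1
    rw [PowerSeries.coeff_mul] at this ⊢
    simp only [Polynomial.coeff_coe, PowerSeries.coeff_mk] at this ⊢
    rw [hP2, ← this, map_sum, Rat.cast_sum]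
    refine Finset.sum_congr rfl fun x _ => ?_
    rw [hQ2]
    have e : Q1.coeff x.1 * (b x.2 : ℚ_[p]) = (b x.2) • Q1.coeff x.1 := by
      rw [nsmul_eq_mul, mul_comm]
    rw [e, map_nsmul, nsmul_eq_mul]
    push_cast; ring
  have h1 := hasSum_poly_mul Q2 _ s hF
  rw [key] at h1
  have h2 := h1.unique (hasSum_poly P2)
  rw [hQ2e, hP2e] at h2
  refine ⟨f (P1.eval 1) / f (Q1.eval 1), ?_⟩
  have : ((f (Q1.eval 1) : ℚ) : ℚ_[p]) ≠ 0 := by exact_mod_cast hf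
  rw [Rat.cast_div, ← h2]
  field_simp

end PS

section dyn
variable {p : ℕ} [Fact p.Prime] (q : ℕ) (g : ℤ_[p] → ℤ_[p])

theorem summable_phi (u : ℤ_[p]) : Summable (fun n : ℕ =>
    (eps0 (-((q : ℤ_[p]) * g^[n] u)) : ℤ_[p]) * (p : ℤ_[p]) ^ n) := by
  have hp : (1:ℝ) < p := by exact_mod_cast (Fact.out : p.Prime).one_lt
  refine Summable.of_norm_bounded (g := fun n : ℕ => ((p:ℝ)⁻¹) ^ n) ?_ ?_
  · exact summable_geometric_of_lt_one (by positivity) (inv_lt_one_of_one_lt₀ hp)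
  · intro n
    rw [norm_mul, norm_pow, PadicInt.norm_p]
    exact mul_le_of_le_one_left (by positivity) (PadicInt.norm_le_one _)

theorem phi_succ (u : ℤ_[p]) :
    phi p q g u = (eps0 (-((q : ℤ_[p]) * u)) : ℤ_[p]) + p * phi p q g (g u) := by
  rw [phi, (summable_phi q g u).tsum_eq_zero_add]
  congr 1
  · simp
  · rw [phi, ← (summable_phi q g (g u)).tsum_mul_left]
    refine tsum_congr fun n => ?_
    rw [Function.iterate_succ_apply, pow_succ]; ring

theorem toZMod_phi (u : ℤ_[p]) :
    (PadicInt.toZMod (phi p q g u)).val = eps0 (-((q : ℤ_[p]) * u)) := by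
  rw [phi_succ]
  simp only [map_add, map_mul, map_natCast, CharP.cast_eq_zero, zero_mul, add_zero]
  rw [ZMod.val_natCast]
  exact Nat.mod_eq_of_lt (ZMod.val_lt _)

theorem eps0_ne_zero_iff (hpq : Nat.Coprime p q) (u : ℤ_[p]) :
    eps0 (-((q : ℤ_[p]) * u)) ≠ 0 ↔ ¬ (p : ℤ_[p]) ∣ u := by
  have hz : ∀ x : ℤ_[p], PadicInt.toZMod x = 0 ↔ (p : ℤ_[p]) ∣ x := by
    intro x
    rw [← RingHom.mem_ker, PadicInt.ker_toZMod, PadicInt.maximalIdeal_eq_span_p,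
      Ideal.mem_span_singleton]
  have hq0 : (q : ZMod p) ≠ 0 := by
    rw [Ne, ZMod.natCast_eq_zero_iff]
    exact (Nat.Prime.coprime_iff_not_dvd Fact.out).1 hpq
  rw [← hz, eps0, Ne, ZMod.val_eq_zero]
  simp [hq0]

theorem eventually_periodic (u : ℤ_[p])
    (h : ((phi p q g u : ℤ_[p]) : ℚ_[p]) ∈ Set.range ((↑) : ℚ → ℚ_[p])) :
    ∃ N L : ℕ, 0 < L ∧ ∀ n, N ≤ n →
      eps0 (-((q : ℤ_[p]) * g^[n + L] u)) = eps0 (-((q : ℤ_[p]) * g^[n] u)) := by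
  obtain ⟨r, hr⟩ := h
  have hp1 : 1 ≤ p := (Fact.out : p.Prime).one_lt.le
  have hs : (r.den : ℤ_[p]) ≠ 0 := by exact_mod_cast r.den_ne_zero
  have h0 : (r.den : ℤ_[p]) * phi p q g u = (r.num : ℤ_[p]) := by
    apply PadicInt.ext
    push_cast
    rw [← hr]
    have := congrArg ((↑) : ℚ → ℚ_[p]) (Rat.den_mul_eq_num r)
    push_cast at this
    exact this
  have key : ∀ n, ∃ t : ℤ, |t| ≤ |r.num| + r.den ∧
      (r.den : ℤ_[p]) * phi p q g (g^[n] u) = (t : ℤ_[p]) := by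
    intro n
    induction n with
    | zero => exact ⟨r.num, by linarith [Int.natCast_nonneg r.den], by simpa using h0⟩
    | succ n ih =>
      obtain ⟨t, ht, hte⟩ := ih
      rw [phi_succ] at hte
      set a := eps0 (-((q : ℤ_[p]) * g^[n] u)) with ha
      have halt : a < p := ZMod.val_lt _
      have hd : (p : ℤ) ∣ t - r.den * a := by
        have : ((p : ℤ_[p])) ^ 1 ∣ ((t - r.den * a : ℤ) : ℤ_[p]) := by
          refine ⟨r.den * phi p q g (g (g^[n] u)), ?_⟩
          push_cast
          rw [← hte]; ring
        have := (PadicInt.pow_p_dvd_int_iff 1 _).1 this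
        simpa using this
      obtain ⟨t', ht'⟩ := hd
      refine ⟨t', ?_, ?_⟩
      · have hp0 : (0:ℤ) < p := by exact_mod_cast hp1
        have h1 : (p:ℤ) * |t'| = |t - r.den * a| := by
          rw [ht', abs_mul, abs_of_pos hp0]
        have h2 : |t - r.den * a| ≤ |t| + r.den * a := by
          refine (abs_sub _ _).trans ?_
          rw [abs_of_nonneg (by positivity : (0:ℤ) ≤ r.den * a)]
        have h3 : (r.den : ℤ) * a ≤ r.den * (p - 1) := by
          apply mul_le_mul_of_nonneg_left _ (by positivity)
          have : (a:ℤ) < p := by exact_mod_cast halt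
          linarith
        have h4 : (0:ℤ) ≤ |r.num| * (p - 1) :=
          mul_nonneg (abs_nonneg _) (by linarith)
        have h5 : (p:ℤ) * |t'| ≤ p * (|r.num| + r.den) := by nlinarith
        exact le_of_mul_le_mul_left h5 hp0
      · rw [Function.iterate_succ_apply']
        have hpne : (p : ℤ_[p]) ≠ 0 := by exact_mod_cast (Fact.out : p.Prime).ne_zero
        apply mul_left_cancel₀ hpne
        have := congrArg ((↑) : ℤ → ℤ_[p]) ht'
        push_cast at this
        rw [← this, ← hte]; ring
  choose t htb hte using key
  have hfin : ∃ i j, i < j ∧ t i = t j := by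
    have hm : Set.MapsTo t Set.univ (Set.Icc (-(|r.num| + r.den)) (|r.num| + r.den)) :=
      fun n _ => Set.mem_Icc.2 (abs_le.1 (htb n))
    obtain ⟨i, -, j, -, hij, he⟩ :=
      Set.infinite_univ.exists_lt_map_eq_of_mapsTo hm (Set.finite_Icc _ _)
    exact ⟨i, j, hij, he⟩
  obtain ⟨i, j, hij, he⟩ := hfin
  have hphi : ∀ k, phi p q g (g^[i + k] u) = phi p q g (g^[j + k] u) := by
    intro k
    induction k with
    | zero =>
      apply mul_left_cancel₀ hs
      rw [add_zero, add_zero, hte, hte, he]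
    | succ k ih =>
      have e := toZMod_phi q g (g^[i + k] u)
      rw [ih, toZMod_phi] at e
      rw [phi_succ, phi_succ q g (g^[j + k] u), e] at ih
      have hpne : (p : ℤ_[p]) ≠ 0 := by exact_mod_cast (Fact.out : p.Prime).ne_zero
      have := mul_left_cancel₀ hpne (add_left_cancel ih)
      rwa [← Function.iterate_succ_apply' g, ← Function.iterate_succ_apply' g] at this
  refine ⟨i, j - i, by omega, fun n hn => ?_⟩
  have := hphi (n - i)
  rw [← toZMod_phi q g, ← toZMod_phi q g (g^[n] u)]
  rw [show i + (n - i) = n by omega, show j + (n - i) = n + (j - i) by omega] at this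
  rw [this]

end dyn

theorem psi_periodic (a : ℕ → ℕ) (ψ : ℕ → ℕ) (hm : StrictMono ψ)
    (h1 : ∀ n, a (ψ n) ≠ 0) (h2 : ∀ i, a i ≠ 0 → ∃ n, ψ n = i)
    (N L : ℕ) (hL : 0 < L) (h : ∀ n, N ≤ n → a (n + L) = a n) :
    ∃ m, 0 < m ∧ ∀ n, N ≤ n → ψ (n + m) = ψ n + L := by
  have hN : ∀ n, N ≤ n → N ≤ ψ n := fun n hn => hn.trans (hm.le_apply)
  obtain ⟨M, hM⟩ := h2 (ψ N + L) (by rw [h _ (hN N le_rfl)]; exact h1 N)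
  have hNM : N < M := hm.lt_iff_lt.1 (by omega)
  have key : (fun k => ψ (M + k)) = fun k => ψ (N + k) + L := by
    refine (StrictMono.range_inj (f := fun k => ψ (M + k)) (g := fun k => ψ (N + k) + L)
      (fun x y hxy => hm (by omega)) (fun x y hxy => ?_)).1 ?_
    · have := hm (show N + x < N + y by omega)
      simpa using this
    · ext i
      constructor
      · rintro ⟨k, rfl⟩
        have hk : ψ M ≤ ψ (M + k) := hm.monotone (by omega)
        have hNN := hN N le_rfl
        obtain ⟨l, hl⟩ := h2 (ψ (M + k) - L) (by
          rw [← h _ (by omega), show ψ (M + k) - L + L = ψ (M + k) by omega]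
          exact h1 _)
        have hl2 : N ≤ l := hm.le_iff_le.1 (by omega)
        exact ⟨l - N, by simp only; rw [show N + (l - N) = l by omega]; omega⟩
      · rintro ⟨k, rfl⟩
        obtain ⟨l, hl⟩ := h2 (ψ (N + k) + L) (by rw [h _ (hN _ (by omega))]; exact h1 _)
        have hk : ψ N ≤ ψ (N + k) := hm.monotone (by omega)
        have hl2 : M ≤ l := hm.le_iff_le.1 (by omega)
        exact ⟨l - M, by simp only; rw [show M + (l - M) = l by omega]; omega⟩
  refine ⟨M - N, by omega, fun n hn => ?_⟩
  have := congrFun key (n - N)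
  rwa [show M + (n - N) = n + (M - N) by omega, show N + (n - N) = n by omega] at this

theorem ratl_of_geom {K : Type*} [Field K] (b : ℕ → K) (c : K) (m N : ℕ) (hm : 0 < m)
    (h : ∀ n, N ≤ n → b (n + m) = c * b n) :
    ∃ P Q : Polynomial K, Q ≠ 0 ∧ (Q : PowerSeries K) * PowerSeries.mk b = P := by
  let Q : Polynomial K := 1 - Polynomial.C c * Polynomial.X ^ m
  have hQ0 : Q.coeff 0 = 1 := by
    simp [Q, hm.ne]
  refine ⟨PowerSeries.trunc (N + m) ((Q : PowerSeries K) * PowerSeries.mk b), Q, ?_, ?_⟩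
  · intro h0; simp [h0] at hQ0
  · ext n
    rw [Polynomial.coeff_coe, PowerSeries.coeff_trunc]
    split_ifs with hn
    · rfl
    · obtain ⟨k, rfl⟩ : ∃ k, n = k + m := ⟨n - m, by omega⟩
      simp only [Q, Polynomial.coe_sub, Polynomial.coe_one, Polynomial.coe_mul, Polynomial.coe_C,
        Polynomial.coe_pow, Polynomial.coe_X, sub_mul, one_mul, map_sub, mul_assoc,
        PowerSeries.coeff_C_mul, PowerSeries.coeff_X_pow_mul, PowerSeries.coeff_mk]
      rw [h k (by omega), sub_self]

end Stmt8Aux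

/-- If `ψ` enumerates (in increasing order) the indices `i` with `p ∤ u_i`, the power series
`S_u(T) = Σ p^{ψ(n+1)} u_{ψ(n+1)} T^n ∈ ℚ_p[[T]]` is rational iff `φ_{p,q}(u)` is rational. -/
theorem stmt8 (p q : ℕ) [Fact p.Prime] (hq : 0 < q) (hpq : Nat.Coprime p q)
    (g : ℤ_[p] → ℤ_[p])
    (hg : ∀ u : ℤ_[p], (p : ℤ_[p]) * g u =
      if (p : ℤ_[p]) ∣ u then u
      else (q : ℤ_[p]) * u + (eps0 (-((q : ℤ_[p]) * u)) : ℤ_[p]))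
    (u : ℤ_[p])
    (ψ : ℕ → ℕ) (hψmono : StrictMono ψ)
    (hψmem : ∀ n, ¬ (p : ℤ_[p]) ∣ g^[ψ n] u)
    (hψall : ∀ i, ¬ (p : ℤ_[p]) ∣ g^[i] u → ∃ n, ψ n = i) :
    (∃ P Q : Polynomial ℚ_[p], Q ≠ 0 ∧
        (Q : PowerSeries ℚ_[p]) *
          PowerSeries.mk (fun n : ℕ =>
            (p : ℚ_[p]) ^ ψ (n + 1) * ((g^[ψ (n + 1)] u : ℤ_[p]) : ℚ_[p])) =
          (P : PowerSeries ℚ_[p])) ↔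
      ((phi p q g u : ℤ_[p]) : ℚ_[p]) ∈ Set.range ((↑) : ℚ → ℚ_[p]) := by
  have hpne : (p : ℤ_[p]) ≠ 0 := by exact_mod_cast (Fact.out : p.Prime).ne_zero
  set a : ℕ → ℕ := fun n => eps0 (-((q : ℤ_[p]) * g^[n] u)) with ha
  have ha0 : ∀ n, a n ≠ 0 ↔ ¬ (p : ℤ_[p]) ∣ g^[n] u := fun n =>
    Stmt8Aux.eps0_ne_zero_iff q hpq _
  set b : ℕ → ℕ := fun n => a (ψ n) * p ^ ψ n with hb
  set w : ℕ → ℚ_[p] := fun n => (p : ℚ_[p]) ^ ψ n * ((g^[ψ n] u : ℤ_[p]) : ℚ_[p]) with hw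
  have hv1 : ∀ k, (p : ℤ_[p]) ∣ g^[k] u →
      (p : ℤ_[p]) ^ (k + 1) * g^[k + 1] u = (p : ℤ_[p]) ^ k * g^[k] u := by
    intro k hk
    have := hg (g^[k] u)
    rw [if_pos hk] at this
    rw [Function.iterate_succ_apply', pow_succ, mul_assoc, this]
  have hv2 : ∀ k, ¬ (p : ℤ_[p]) ∣ g^[k] u →
      (p : ℤ_[p]) ^ (k + 1) * g^[k + 1] u
        = q * ((p : ℤ_[p]) ^ k * g^[k] u) + a k * (p : ℤ_[p]) ^ k := by
    intro k hk
    have := hg (g^[k] u)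
    rw [if_neg hk] at this
    rw [Function.iterate_succ_apply', pow_succ, mul_assoc, this]
    ring
  have hrec : ∀ n, w (n + 1) = q * w n + b n := by
    intro n
    have hlt : ψ n < ψ (n + 1) := hψmono (Nat.lt_succ_self n)
    have hconst : ∀ k, ψ n + 1 ≤ k → k ≤ ψ (n + 1) →
        (p : ℤ_[p]) ^ k * g^[k] u = (p : ℤ_[p]) ^ (ψ n + 1) * g^[ψ n + 1] u := by
      intro k hk
      induction k, hk using Nat.le_induction with
      | base => intro _; rfl
      | succ k hk ih =>
        intro hk2
        rw [hv1 k ?_, ih (by omega)]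
        by_contra hnd
        obtain ⟨m, rfl⟩ := hψall k hnd
        have h1 : n < m := hψmono.lt_iff_lt.1 (by omega)
        have h2 : m < n + 1 := hψmono.lt_iff_lt.1 (by omega)
        omega
    have e := hconst _ hlt le_rfl
    rw [hv2 _ (hψmem n)] at e
    have e2 := congrArg ((↑) : ℤ_[p] → ℚ_[p]) e
    push_cast at e2
    simp only [hw, hb]
    push_cast
    exact e2
  have hS : ((1 - Polynomial.C (q : ℚ_[p]) * Polynomial.X : Polynomial ℚ_[p]) :
      PowerSeries ℚ_[p]) * PowerSeries.mk (fun n => w (n + 1)) =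
      ((Polynomial.C (q * w 0) : Polynomial ℚ_[p]) : PowerSeries ℚ_[p])
        + PowerSeries.mk (fun n => (b n : ℚ_[p])) := by
    ext n
    simp only [Polynomial.coe_sub, Polynomial.coe_one, Polynomial.coe_mul, Polynomial.coe_C,
      Polynomial.coe_X, sub_mul, one_mul, map_sub, map_add, mul_assoc, PowerSeries.coeff_C_mul,
      PowerSeries.coeff_mk]
    cases n with
    | zero => simp [hrec 0]
    | succ n =>
      rw [PowerSeries.coeff_succ_X_mul, PowerSeries.coeff_mk, PowerSeries.coeff_C,
        if_neg (Nat.succ_ne_zero n), hrec (n + 1)]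
      ring
  have hsum : HasSum (fun n => (b n : ℚ_[p])) ((phi p q g u : ℤ_[p]) : ℚ_[p]) := by
    have h1 := (Stmt8Aux.summable_phi q g u).hasSum
    have h2 := h1.map PadicInt.Coe.ringHom (by exact continuous_subtype_val)
    have h3 := (Function.Injective.hasSum_iff hψmono.injective (fun x hx => ?_)).2 h2
    · convert h3 using 1
      · funext n
        simp only [hb, ha, Function.comp_apply, map_mul, map_pow, map_natCast]
        push_cast
        rfl
      · rfl
    · have : a x = 0 := by
        by_contra hne
        obtain ⟨n, hn⟩ := hψall x ((ha0 x).1 hne)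
        exact hx ⟨n, hn⟩
      simp only [ha] at this
      simp [this]
  constructor
  · rintro ⟨P, Q, hQ, hPQ⟩
    refine Stmt8Aux.rational_of b _ hsum
      ((1 - Polynomial.C (q : ℚ_[p]) * Polynomial.X) * P - Q * Polynomial.C (q * w 0)) Q hQ ?_
    rw [Polynomial.coe_sub, Polynomial.coe_mul, Polynomial.coe_mul, ← hPQ]
    change _ = _ * ((Q : PowerSeries ℚ_[p]) * PowerSeries.mk (fun n => w (n + 1))) - _
    linear_combination (-(Q : PowerSeries ℚ_[p])) * hS
  · intro h
    obtain ⟨N, L, hL, hper⟩ := Stmt8Aux.eventually_periodic q g u h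
    obtain ⟨m, hm, hψ⟩ := Stmt8Aux.psi_periodic a ψ hψmono (fun n => (ha0 _).2 (hψmem n))
      (fun i hi => hψall i ((ha0 i).1 hi)) N L hL hper
    obtain ⟨P, Q, hQ, hPQ⟩ := Stmt8Aux.ratl_of_geom (fun n => (b n : ℚ_[p])) ((p : ℚ_[p]) ^ L)
      m N hm (by
        intro n hn
        have e : a (ψ n + L) = a (ψ n) := hper _ (hn.trans hψmono.le_apply)
        simp only [hb]
        rw [hψ n hn, e]
        push_cast
        ring)
    refine ⟨Q * Polynomial.C (q * w 0) + P,
      Q * (1 - Polynomial.C (q : ℚ_[p]) * Polynomial.X), mul_ne_zero hQ ?_, ?_⟩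
    · intro h0
      have := congrArg (Polynomial.coeff · 0) h0
      simp at this
    · rw [Polynomial.coe_mul, mul_assoc, Polynomial.coe_add, Polynomial.coe_mul, ← hPQ, hS]
      ring
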